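/- Gaussian kernel integral bound: there exist constants C > 0 such that for all sufficiently small ε ≥ 0, ϱ ≥ 0 and all θ in a neighborhood of 1, and every v ∈ R^3, ∫_{R^3} ( |v-v'| + |v-v'|^{-1} ) exp( -((1-ε)/(8θ)) |v-v'|^2 - ((1-ε)/(8θ)) (|v|^2 - |v'|^2)^2/|v-v'|^2 ) · ( (1+|v|^2)^{ℓ/2} e^{±ϱ|v|^2/(4θ)} ) / ( (1+|v'|^2)^{ℓ/2} e^{±ϱ|v'|^2/(4θ)} ) dv' ≤ C/(1+|v|). -/

import Mathlib

open Real MeasureTheory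

/-- fixed dominating function -/
noncomputable def gkdF (w : Fin 3 → ℝ) : ℝ :=
  Real.exp (-(w 1 ^ 2 + w 2 ^ 2) / 96) / (w 0 ^ 2 + w 1 ^ 2 + w 2 ^ 2)

lemma gkdF_nonneg (w : Fin 3 → ℝ) : 0 ≤ gkdF w := by
  unfold gkdF; positivity

lemma gkdF_measurable : Measurable gkdF := by
  unfold gkdF; fun_prop

lemma gkd_ball : Integrable (fun x : EuclideanSpace ℝ (Fin 3) =>
    (Set.Iio (1:ℝ)).indicator (fun r => (r ^ 2)⁻¹) ‖x‖) := by
  rw [integrable_fun_norm_addHaar volume (f := (Set.Iio (1:ℝ)).indicator (fun r => (r ^ 2)⁻¹))]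
  have h1 : IntegrableOn (fun _ : ℝ => (1:ℝ)) (Set.Ioo 0 1) := by simp
  have h2 : Integrable ((Set.Ioo (0:ℝ) 1).indicator (fun _ => (1:ℝ))) := by
    rw [integrable_indicator_iff measurableSet_Ioo]; exact h1
  refine (h2.integrableOn (s := Set.Ioi 0)).congr_fun ?_ measurableSet_Ioi
  intro x hx
  have hx' : (0:ℝ) < x := hx
  by_cases h : x < 1
  · simp [h, hx', hx'.ne']
  · simp [h]

lemma gkdF_integrable : Integrable gkdF := by
  have hb : Integrable (fun w : Fin 3 → ℝ =>
      (Set.Iio (1:ℝ)).indicator (fun r => (r ^ 2)⁻¹) ‖WithLp.toLp 2 w‖) :=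
    (PiLp.volume_preserving_toLp (Fin 3)).integrable_comp_of_integrable gkd_ball
  have hp : Integrable (fun w : Fin 3 → ℝ => ∏ i, (![fun x : ℝ => (1 + x ^ 2)⁻¹,
      fun x : ℝ => Real.exp (-(1/96) * x ^ 2), fun x : ℝ => Real.exp (-(1/96) * x ^ 2)] i) (w i)) := by
    apply Integrable.fintype_prod
    intro i
    fin_cases i
    · exact integrable_inv_one_add_sq
    · exact integrable_exp_neg_mul_sq (by norm_num)
    · exact integrable_exp_neg_mul_sq (by norm_num)
  refine (hb.add (hp.const_mul 2)).mono' gkdF_measurable.aestronglyMeasurable (.of_forall fun w => ?_)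
  rw [Real.norm_of_nonneg (gkdF_nonneg w)]
  have hn : ‖WithLp.toLp 2 w‖ ^ 2 = w 0 ^ 2 + w 1 ^ 2 + w 2 ^ 2 := by
    rw [EuclideanSpace.norm_sq_eq]; simp [Fin.sum_univ_three]
  simp only [Pi.add_apply, Fin.prod_univ_three, Matrix.cons_val_zero, Matrix.cons_val_one,
    Matrix.cons_val]
  rw [mul_assoc (_⁻¹), ← Real.exp_add]
  have he : -(1/96) * w 1 ^ 2 + -(1/96) * w 2 ^ 2 = -(w 1 ^ 2 + w 2 ^ 2) / 96 := by ring
  rw [he]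
  unfold gkdF
  rw [← hn]
  by_cases h : ‖WithLp.toLp 2 w‖ < 1
  · rw [Set.indicator_of_mem (Set.mem_Iio.2 h)]
    have : Real.exp (-(w 1 ^ 2 + w 2 ^ 2) / 96) ≤ 1 := by
      rw [Real.exp_le_one_iff]; nlinarith [sq_nonneg (w 1), sq_nonneg (w 2)]
    have h2 : Real.exp (-(w 1 ^ 2 + w 2 ^ 2) / 96) / ‖WithLp.toLp 2 w‖ ^ 2
        ≤ (‖WithLp.toLp 2 w‖ ^ 2)⁻¹ := by
      rw [div_eq_mul_inv]
      exact mul_le_of_le_one_left (by positivity) this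
    have : 0 ≤ 2 * ((1 + w 0 ^ 2)⁻¹ * Real.exp (-(w 1 ^ 2 + w 2 ^ 2) / 96)) := by positivity
    linarith
  · have h0 : (Set.Iio (1:ℝ)).indicator (fun r => (r ^ 2)⁻¹) ‖WithLp.toLp 2 w‖ = 0 := by
      simp [h]
    rw [h0, zero_add]
    have h1 : 1 ≤ ‖WithLp.toLp 2 w‖ ^ 2 := one_le_pow₀ (not_lt.1 h)
    have h3 : (‖WithLp.toLp 2 w‖ ^ 2)⁻¹ ≤ 2 * (1 + w 0 ^ 2)⁻¹ := by
      rw [← div_eq_mul_inv, inv_eq_one_div, div_le_div_iff₀ (by linarith) (by positivity)]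
      nlinarith [sq_nonneg (w 1), sq_nonneg (w 2)]
    rw [div_eq_mul_inv, mul_comm]
    calc _ ≤ (2 * (1 + w 0 ^ 2)⁻¹) * Real.exp (-(w 1 ^ 2 + w 2 ^ 2) / 96) := by gcongr
      _ = _ := by ring

/-- orthonormal basis adapted to v -/
lemma gkd_basis (v : EuclideanSpace ℝ (Fin 3)) :
    ∃ b : OrthonormalBasis (Fin 3) ℝ (EuclideanSpace ℝ (Fin 3)), v = ‖v‖ • b 0 := by
  by_cases hv : v = 0
  · exact ⟨EuclideanSpace.basisFun (Fin 3) ℝ, by simp [hv]⟩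
  · have hv' : ‖v‖ ≠ 0 := norm_ne_zero_iff.2 hv
    have ho : Orthonormal ℝ (({0} : Set (Fin 3)).domRestrict (fun _ => ‖v‖⁻¹ • v)) := by
      constructor
      · intro i
        simp [norm_smul, hv']
      · intro i j hij
        exact absurd (Subsingleton.elim i j) hij
    obtain ⟨b, hb⟩ := ho.exists_orthonormalBasis_extension_of_card_eq (by simp)
    refine ⟨b, ?_⟩
    rw [hb 0 rfl, smul_smul, mul_inv_cancel₀ hv', one_smul]

lemma gkd_dom (v : EuclideanSpace ℝ (Fin 3)) : ∃ g : EuclideanSpace ℝ (Fin 3) → ℝ,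
    Integrable g ∧ (∫ x, g x) ≤ 2 * (∫ w, gkdF w) / (1 + ‖v‖) ∧
    ∀ x, Real.exp (-‖x‖ ^ 2 / 96) / (‖x‖ ^ 2 + (inner ℝ v x) ^ 2) ≤ g x := by
  obtain ⟨b, hb⟩ := gkd_basis v
  set lam : ℝ := √(1 + ‖v‖ ^ 2) with hlam
  have hl2 : lam ^ 2 = 1 + ‖v‖ ^ 2 := Real.sq_sqrt (by positivity)
  have hl0 : 0 < lam := Real.sqrt_pos.2 (by positivity)
  let D : (Fin 3 → ℝ) →ₗ[ℝ] (Fin 3 → ℝ) := Matrix.toLin' (Matrix.diagonal ![lam, 1, 1])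
  have hdet : Matrix.det (Matrix.diagonal ![lam, 1, 1]) = lam := by
    simp [Matrix.det_diagonal, Fin.prod_univ_three]
  have hD : Measure.map D volume = ENNReal.ofReal lam⁻¹ • volume := by
    have := Real.map_matrix_volume_pi_eq_smul_volume_pi (M := Matrix.diagonal ![lam, 1, 1])
      (by rw [hdet]; exact hl0.ne')
    rw [hdet, abs_of_pos (inv_pos.2 hl0)] at this
    exact this
  have hDm : Measurable D := (LinearMap.continuous_on_pi D).measurable
  have hP := (PiLp.volume_preserving_ofLp (Fin 3)).comp b.measurePreserving_repr
  have hgi : Integrable (fun w => gkdF (D w)) := by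
    have : Integrable gkdF (Measure.map D volume) := by
      rw [hD]; exact gkdF_integrable.smul_measure (by simp)
    exact this.comp_measurable hDm
  have hint : ∫ w, gkdF (D w) = lam⁻¹ * ∫ w, gkdF w := by
    rw [← integral_map hDm.aemeasurable gkdF_measurable.aestronglyMeasurable, hD,
      integral_smul_measure, ENNReal.toReal_ofReal (by positivity), smul_eq_mul]
  refine ⟨fun x => gkdF (D (WithLp.ofLp (b.repr x))), hP.integrable_comp_of_integrable hgi, ?_, ?_⟩
  · have h1 : ∫ x, gkdF (D (WithLp.ofLp (b.repr x))) = ∫ w, gkdF (D w) := by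
      have hm : AEStronglyMeasurable (fun w => gkdF (D w)) volume :=
        (gkdF_measurable.comp hDm).aestronglyMeasurable
      conv_rhs => rw [← hP.map_eq]
      rw [integral_map hP.measurable.aemeasurable (by rw [hP.map_eq]; exact hm)]
      rfl
    rw [h1, hint, mul_comm, div_eq_mul_inv, mul_comm 2, mul_assoc]
    refine mul_le_mul_of_nonneg_left ?_ (integral_nonneg gkdF_nonneg)
    rw [← div_eq_mul_inv, inv_eq_one_div, div_le_div_iff₀ hl0 (by positivity)]
    nlinarith [norm_nonneg v, sq_nonneg (‖v‖ - 1)]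
  · intro x
    set y := b.repr x with hy
    have hn : ‖x‖ ^ 2 = y 0 ^ 2 + y 1 ^ 2 + y 2 ^ 2 := by
      rw [← b.repr.norm_map x, ← hy, EuclideanSpace.norm_sq_eq]; simp [Fin.sum_univ_three]
    have hi : inner ℝ v x = ‖v‖ * y 0 := by
      rw [hy, b.repr_apply_apply]
      conv_lhs => rw [hb]
      rw [real_inner_smul_left]
    have e0 : D (WithLp.ofLp y) 0 = lam * y 0 := by simp [D, Matrix.mulVec_diagonal]
    have e1 : D (WithLp.ofLp y) 1 = y 1 := by simp [D, Matrix.mulVec_diagonal]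
    have e2 : D (WithLp.ofLp y) 2 = y 2 := by simp [D, Matrix.mulVec_diagonal]
    change _ ≤ gkdF (D (WithLp.ofLp y))
    unfold gkdF
    rw [e0, e1, e2, hi]
    have hden : ‖x‖ ^ 2 + (‖v‖ * y 0) ^ 2 = (lam * y 0) ^ 2 + y 1 ^ 2 + y 2 ^ 2 := by
      rw [hn, mul_pow, mul_pow, hl2]; ring
    rw [hden]
    refine div_le_div_of_nonneg_right ?_ (by positivity)
    apply Real.exp_le_exp.2
    rw [hn]
    nlinarith [sq_nonneg (y 0)]

/-- control of the exponent -/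
lemma gkd_exponent (ε ϱ θ σ r p s A B : ℝ) (hε : 0 ≤ ε) (hε1 : ε ≤ 1 / 4) (hϱ : 0 ≤ ϱ)
    (hϱ1 : ϱ ≤ 1 / 4) (hθ : |θ - 1| ≤ 1 / 2) (hσ : σ = 1 ∨ σ = -1) (hr : 0 < r)
    (hs : s = A - B) (hp : B - A = r ^ 2 + 2 * p) :
    (-((1 - ε) / (8 * θ)) * r ^ 2 - ((1 - ε) / (8 * θ)) * s ^ 2 / r ^ 2)
      + σ * ϱ * A / (4 * θ) - σ * ϱ * B / (4 * θ) ≤ -(1 / 48) * r ^ 2 + -(1 / 48) * (p / r) ^ 2 := by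
  rw [abs_le] at hθ
  have hθ0 : 0 < θ := by linarith
  obtain ⟨q, hq⟩ : ∃ q, q = s / r := ⟨_, rfl⟩
  obtain ⟨t, ht⟩ : ∃ t, t = p / r := ⟨_, rfl⟩
  have hsq : s = q * r := by rw [hq]; field_simp
  have hpt : p = t * r := by rw [ht]; field_simp
  have hq2 : q = -(r + 2 * t) := by
    have : q * r = -(r + 2 * t) * r := by rw [← hsq, hs]; nlinarith
    exact mul_right_cancel₀ hr.ne' this
  have key : σ * s ≤ (r ^ 2 + q ^ 2) / 2 := by
    rcases hσ with h | h <;> subst h <;> rw [hsq] <;> nlinarith [sq_nonneg (q - r), sq_nonneg (q + r)]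
  have hS : 0 ≤ r ^ 2 + q ^ 2 := by positivity
  have e1 : (-((1 - ε) / (8 * θ)) * r ^ 2 - ((1 - ε) / (8 * θ)) * s ^ 2 / r ^ 2)
      + σ * ϱ * A / (4 * θ) - σ * ϱ * B / (4 * θ)
      = (-(1 - ε) * (r ^ 2 + q ^ 2) + 2 * ϱ * (σ * s)) / (8 * θ) := by
    rw [hq, hs]; field_simp; ring
  have e2 : (-(1 - ε) * (r ^ 2 + q ^ 2) + 2 * ϱ * (σ * s)) / (8 * θ) ≤ -(1/24) * (r ^ 2 + q ^ 2) := by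
    rw [div_le_iff₀ (by positivity)]
    have h1 : ϱ * (σ * s) ≤ ϱ * ((r ^ 2 + q ^ 2) / 2) := mul_le_mul_of_nonneg_left key hϱ
    have h2 : (ε + ϱ) * (r ^ 2 + q ^ 2) ≤ (1/2) * (r ^ 2 + q ^ 2) :=
      mul_le_mul_of_nonneg_right (by linarith) hS
    have h3 : θ * (r ^ 2 + q ^ 2) ≤ (3/2) * (r ^ 2 + q ^ 2) :=
      mul_le_mul_of_nonneg_right (by linarith) hS
    nlinarith
  rw [e1, ← ht]
  refine e2.trans ?_
  rw [hq2]
  nlinarith [sq_nonneg (r + (4/3) * t), sq_nonneg t]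

lemma gkd_poly (m R : ℝ) (hm : 2 ≤ m) (hR : 0 ≤ R) :
    (1 + R) ^ m ≤ (96 * m) ^ m * Real.exp (R / 96) := by
  have h1 : 1 + R ≤ (96 * m) * Real.exp (R / (96 * m)) := by
    have := Real.add_one_le_exp (R / (96 * m))
    calc 1 + R ≤ (96 * m) * (R / (96 * m) + 1) := by field_simp; linarith
      _ ≤ _ := by gcongr
  calc (1 + R) ^ m ≤ ((96 * m) * Real.exp (R / (96 * m))) ^ m :=
        Real.rpow_le_rpow (by linarith) h1 (by linarith)
    _ = _ := by
      rw [Real.mul_rpow (by linarith) (Real.exp_pos _).le, ← Real.exp_mul]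
      congr 2; field_simp

/-- pointwise bound -/
lemma gkd_pointwise (ℓ : ℝ) (hℓ : 0 ≤ ℓ) (ε ϱ θ σ : ℝ) (hε : 0 ≤ ε) (hε1 : ε ≤ 1 / 4) (hϱ : 0 ≤ ϱ)
    (hϱ1 : ϱ ≤ 1 / 4) (hθ : |θ - 1| ≤ 1 / 2) (hσ : σ = 1 ∨ σ = -1)
    (v v' : EuclideanSpace ℝ (Fin 3)) :
    (‖v - v'‖ + ‖v - v'‖⁻¹) *
            Real.exp (-((1 - ε) / (8 * θ)) * ‖v - v'‖ ^ 2 -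
              ((1 - ε) / (8 * θ)) * (‖v‖ ^ 2 - ‖v'‖ ^ 2) ^ 2 / ‖v - v'‖ ^ 2) *
            ((1 + ‖v‖ ^ 2) ^ (ℓ / 2) * Real.exp (σ * ϱ * ‖v‖ ^ 2 / (4 * θ))) /
            ((1 + ‖v'‖ ^ 2) ^ (ℓ / 2) * Real.exp (σ * ϱ * ‖v'‖ ^ 2 / (4 * θ))) ≤
    (48 * 2 ^ (ℓ / 2) * (96 * (ℓ / 2 + 2)) ^ (ℓ / 2 + 2)) *
      (Real.exp (-‖v' - v‖ ^ 2 / 96) / (‖v' - v‖ ^ 2 + (inner ℝ v (v' - v)) ^ 2)) := by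
  rw [norm_sub_rev v v']
  set x := v' - v with hx
  set r := ‖x‖ with hr
  set p := inner ℝ v x with hp
  have hv' : v' = v + x := by rw [hx]; abel
  have hB : ‖v'‖ ^ 2 - ‖v‖ ^ 2 = r ^ 2 + 2 * p := by
    rw [hv', norm_add_sq_real]; ring
  have hr0 : 0 ≤ r := norm_nonneg _
  rcases hr0.eq_or_lt with h0 | h0
  · rw [← h0]; simp only [inv_zero, add_zero, zero_mul, zero_div]; positivity
  have hexp := gkd_exponent ε ϱ θ σ r p _ _ _ hε hε1 hϱ hϱ1 hθ hσ h0 rfl hB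
  -- Peetre
  have hpe : 1 + ‖v‖ ^ 2 ≤ 2 * (1 + r ^ 2) * (1 + ‖v'‖ ^ 2) := by
    have hv : ‖v‖ ≤ ‖v'‖ + r := by
      have : v = v' - x := by rw [hx]; abel
      calc ‖v‖ = ‖v' - x‖ := by rw [← this]
        _ ≤ _ := norm_sub_le _ _
    have : ‖v‖ ^ 2 ≤ (‖v'‖ + r) ^ 2 := by gcongr
    nlinarith [sq_nonneg (‖v'‖ - r), sq_nonneg (‖v'‖ * r)]
  have hw : (1 + ‖v‖ ^ 2) ^ (ℓ / 2) ≤ 2 ^ (ℓ / 2) * (1 + r ^ 2) ^ (ℓ / 2) * (1 + ‖v'‖ ^ 2) ^ (ℓ / 2) := by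
    rw [← Real.mul_rpow (by norm_num) (by positivity), ← Real.mul_rpow (by positivity) (by positivity)]
    exact Real.rpow_le_rpow (by positivity) hpe (by positivity)
  have hb : Real.exp (-(1 / 48) * (p / r) ^ 2) ≤ 48 * (r ^ 2 / (r ^ 2 + p ^ 2)) := by
    have h1 := Real.add_one_le_exp ((1 / 48) * (p / r) ^ 2)
    rw [neg_mul, Real.exp_neg]
    have h2 : 48 * (r ^ 2 / (r ^ 2 + p ^ 2)) = ((1 / 48) * (1 + (p / r) ^ 2))⁻¹ := by
      field_simp
    rw [h2]
    apply inv_anti₀ (by positivity)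
    linarith
  have hpoly := gkd_poly (ℓ / 2 + 2) (r ^ 2) (by linarith) (by positivity)
  rw [Real.rpow_add (by positivity) (ℓ / 2) 2] at hpoly
  set W := (1 + ‖v‖ ^ 2) ^ (ℓ / 2)
  set W' := (1 + ‖v'‖ ^ 2) ^ (ℓ / 2)
  have hW' : 0 < W' := by positivity
  set Q := (1 + r ^ 2) ^ (ℓ / 2)
  set K := (96 * (ℓ / 2 + 2)) ^ (ℓ / 2 + 2)
  set T := (2:ℝ) ^ (ℓ / 2)
  have hT : 0 < T := by positivity
  have hQ : 0 < Q := by positivity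
  rw [Real.rpow_two] at hpoly
  set X := -((1 - ε) / (8 * θ)) * r ^ 2 - (1 - ε) / (8 * θ) * (‖v‖ ^ 2 - ‖v'‖ ^ 2) ^ 2 / r ^ 2
  clear_value X
  calc (r + r⁻¹) * Real.exp X * (W * Real.exp (σ * ϱ * ‖v‖ ^ 2 / (4 * θ))) /
        (W' * Real.exp (σ * ϱ * ‖v'‖ ^ 2 / (4 * θ)))
      = (r + r⁻¹) * (W / W') * Real.exp (X + σ * ϱ * ‖v‖ ^ 2 / (4 * θ)
          - σ * ϱ * ‖v'‖ ^ 2 / (4 * θ)) := by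
        rw [Real.exp_sub, Real.exp_add]; field_simp
    _ ≤ (r + r⁻¹) * (T * Q) * (Real.exp (-(1 / 48) * r ^ 2) * (48 * (r ^ 2 / (r ^ 2 + p ^ 2)))) := by
        have : W / W' ≤ T * Q := by rw [div_le_iff₀ hW']; exact hw
        have h3 := (Real.exp_le_exp.2 hexp).trans_eq (Real.exp_add _ _)
        have h4 := h3.trans (mul_le_mul_of_nonneg_left hb (Real.exp_pos _).le)
        gcongr
    _ = 48 * T * ((r * (1 + r ^ 2) * Q) * Real.exp (-(1 / 48) * r ^ 2)) / (r ^ 2 + p ^ 2) := by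
        field_simp; ring
    _ ≤ 48 * T * ((K * Real.exp (r ^ 2 / 96)) * Real.exp (-(1 / 48) * r ^ 2)) / (r ^ 2 + p ^ 2) := by
        have : r * (1 + r ^ 2) * Q ≤ K * Real.exp (r ^ 2 / 96) := by
          refine le_trans ?_ hpoly
          have : r ≤ 1 + r ^ 2 := by nlinarith [sq_nonneg (r - 1)]
          have : r * (1 + r ^ 2) ≤ (1 + r ^ 2) ^ 2 := by
            rw [pow_two (1 + r ^ 2)]; exact mul_le_mul_of_nonneg_right this (by positivity)
          rw [mul_comm]; gcongr
        gcongr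
    _ = _ := by
        rw [mul_assoc K, ← Real.exp_add]
        have : r ^ 2 / 96 + -(1 / 48) * r ^ 2 = -r ^ 2 / 96 := by ring
        rw [this]; ring

/-- Gaussian kernel integral bound (decay of the weighted kernel `K_{M,w}`):
for `ℓ ≥ 0` there are `C > 0`, `ε₀ > 0` and a neighborhood of `θ = 1` such that for all
sufficiently small `ε ≥ 0`, `ϱ ≥ 0`, all `θ` close to `1`, either sign `σ = ±1`, and
every `v ∈ ℝ³`, the kernel integral is bounded by `C/(1+|v|)`. -/
theorem gaussian_kernel_decay (ℓ : ℝ) (hℓ : 0 ≤ ℓ) :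
    ∃ C > (0 : ℝ), ∃ ε₀ > (0 : ℝ), ∃ δ > (0 : ℝ),
      ∀ ε ϱ θ : ℝ, 0 ≤ ε → ε ≤ ε₀ → 0 ≤ ϱ → ϱ ≤ ε₀ → |θ - 1| ≤ δ →
      ∀ σ : ℝ, σ = 1 ∨ σ = -1 →
      ∀ v : EuclideanSpace ℝ (Fin 3),
        (∫ v' : EuclideanSpace ℝ (Fin 3),
          (‖v - v'‖ + ‖v - v'‖⁻¹) *
            Real.exp (-((1 - ε) / (8 * θ)) * ‖v - v'‖ ^ 2 -
              ((1 - ε) / (8 * θ)) * (‖v‖ ^ 2 - ‖v'‖ ^ 2) ^ 2 / ‖v - v'‖ ^ 2) *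
            ((1 + ‖v‖ ^ 2) ^ (ℓ / 2) * Real.exp (σ * ϱ * ‖v‖ ^ 2 / (4 * θ))) /
            ((1 + ‖v'‖ ^ 2) ^ (ℓ / 2) * Real.exp (σ * ϱ * ‖v'‖ ^ 2 / (4 * θ)))) ≤
          C / (1 + ‖v‖) := by
  have hI : 0 ≤ ∫ w, gkdF w := integral_nonneg gkdF_nonneg
  set K : ℝ := 48 * 2 ^ (ℓ / 2) * (96 * (ℓ / 2 + 2)) ^ (ℓ / 2 + 2) with hK
  have hK0 : 0 < K := by positivity
  refine ⟨K * (2 * (∫ w, gkdF w)) + 1, by positivity, 1 / 4, by norm_num, 1 / 2, by norm_num, ?_⟩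
  intro ε ϱ θ hε hε1 hϱ hϱ1 hθ σ hσ v
  obtain ⟨g, hg, hgi, hgb⟩ := gkd_dom v
  have hg' : Integrable (fun v' => K * g (v' - v)) := (hg.comp_sub_right v).const_mul K
  refine (integral_mono_of_nonneg (.of_forall fun v' => ?_) hg' (.of_forall fun v' => ?_)).trans ?_
  · positivity
  · exact (gkd_pointwise ℓ hℓ ε ϱ θ σ hε hε1 hϱ hϱ1 hθ hσ v v').trans
      (mul_le_mul_of_nonneg_left (hgb (v' - v)) hK0.le)
  · rw [integral_const_mul, integral_sub_right_eq_self g v]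
    calc K * ∫ x, g x ≤ K * (2 * (∫ w, gkdF w) / (1 + ‖v‖)) :=
          mul_le_mul_of_nonneg_left hgi hK0.le
      _ = (K * (2 * ∫ w, gkdF w)) / (1 + ‖v‖) := by ring
      _ ≤ _ := by gcongr; linarith
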